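/- Let p, q, μ, μ' be unit vectors in ℝ³ (EuclideanSpace ℝ (Fin 3)) with -1 < ⟪p, q⟫ < 1, ⟪μ, p⟫ = 0, ⟪μ', q⟫ = 0, q lying in the plane spanned by p and μ (i.e., q = ⟪p, q⟫ • p + ⟪μ, q⟫ • μ), p lying in the plane spanned by q and μ' (i.e., p = ⟪p, q⟫ • q + ⟪μ', p⟫ • μ'), and sign(⟪μ', p⟫) = sign(⟪μ, q⟫). Then sign(⟪μ, q⟫) • gradient (fun y => arccos(⟪p, y⟫ / ‖y‖)) q = -μ'. (This is the second identity of equation (9) of the paper: the derivative of the signed angle with respect to the normal n⁻ equals minus the co-normal μ⁻ of the other triangle.) -/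

import Mathlib

/-!
The gradient of `y ↦ angle p y` at a unit vector `q` is `-(sin θ)⁻¹ • (p - cos θ • q)`, where `p` is
a unit vector and `θ = angle p q`. The plane condition identifies the component `p - cos θ • q` of
`p` orthogonal to `q` with `s • μ'`, where `s = ⟪μ', p⟫`. By Pythagoras `s ^ 2 = 1 - cos θ ^ 2`, so
`sin θ = |s|`: the gradient is `-(s / |s|) • μ'`, and the factor `sign s` turns it into `-μ'`.
-/

open scoped RealInnerProductSpace

open InnerProductGeometry (angle angle_le_pi angle_nonneg cos_angle sin_angle_mul_norm_mul_norm)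

lemma sign_mul_self_eq_abs (r : ℝ) : Real.sign r * r = |r| := by
  rcases lt_trichotomy r 0 with hr | rfl | hr
  · rw [Real.sign_of_neg hr, abs_of_neg hr, neg_one_mul]
  · rw [mul_zero, abs_zero]
  · rw [Real.sign_of_pos hr, abs_of_pos hr, one_mul]

section InnerProductSpace

variable {E : Type*} [NormedAddCommGroup E] [InnerProductSpace ℝ E]

lemma sq_inner_eq_one_sub_sq_inner {p q μ' : E} (hp : ‖p‖ = 1)
    (hplane : p = ⟪p, q⟫ • q + ⟪μ', p⟫ • μ') : ⟪μ', p⟫ ^ 2 = 1 - ⟪p, q⟫ ^ 2 := by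
  have hpp : (1 : ℝ) = ⟪p, q⟫ ^ 2 + ⟪μ', p⟫ ^ 2 :=
    calc (1 : ℝ) = ⟪p, p⟫ := by rw [real_inner_self_eq_norm_sq, hp, one_pow]
      _ = ⟪⟪p, q⟫ • q + ⟪μ', p⟫ • μ', p⟫ := by rw [← hplane]
      _ = ⟪p, q⟫ ^ 2 + ⟪μ', p⟫ ^ 2 := by
        rw [inner_add_left, real_inner_smul_left, real_inner_smul_left, real_inner_comm p q]
        ring
  linarith

lemma sin_angle_eq_abs_inner {p q μ' : E} (hp : ‖p‖ = 1) (hq : ‖q‖ = 1)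
    (hplane : p = ⟪p, q⟫ • q + ⟪μ', p⟫ • μ') : Real.sin (angle p q) = |⟪μ', p⟫| := by
  have hsin := sin_angle_mul_norm_mul_norm p q
  rw [real_inner_self_eq_norm_sq, real_inner_self_eq_norm_sq, hp, hq] at hsin
  rw [← Real.sqrt_sq_eq_abs, sq_inner_eq_one_sub_sq_inner hp hplane]
  simpa [sq] using hsin

variable [CompleteSpace E]

lemma hasGradientAt_norm {x : E} (hx : x ≠ 0) : HasGradientAt (fun y : E => ‖y‖) (‖x‖⁻¹ • x) x := by
  have hsqrt := (hasStrictFDerivAt_norm_sq x).hasFDerivAt.sqrt (by simpa using hx)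
  simp only [Real.sqrt_sq (norm_nonneg _)] at hsqrt
  rw [hasGradientAt_iff_hasFDerivAt]
  refine hsqrt.congr_fderiv ?_
  ext v
  simp only [map_smul, smul_apply, nsmul_eq_mul, Nat.cast_ofNat, smul_eq_mul, coe_innerSL_apply,
    InnerProductSpace.toDual_apply_apply]
  field

lemma hasGradientAt_inner_div_norm (x : E) {y : E} (hy : y ≠ 0) :
    HasGradientAt (fun z : E => ⟪x, z⟫ / ‖z‖)
      (‖y‖⁻¹ • (x - (⟪x, y⟫ / ‖y‖ ^ 2) • y)) y := by
  have hy' : ‖y‖ ≠ 0 := norm_ne_zero_iff.mpr hy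
  have hinner : HasFDerivAt (fun z : E => ⟪x, z⟫) (innerSL ℝ x) y := (innerSL ℝ x).hasFDerivAt
  have hinv := (hasDerivAt_inv hy').comp_hasFDerivAt y (hasGradientAt_norm hy).hasFDerivAt
  rw [hasGradientAt_iff_hasFDerivAt]
  simp only [div_eq_mul_inv]
  refine (hinner.mul hinv).congr_fderiv ?_
  ext v
  simp only [map_smul, map_sub, neg_smul, smul_neg, Function.comp_apply, add_apply, sub_apply,
    neg_apply, smul_apply, smul_eq_mul, coe_innerSL_apply, InnerProductSpace.toDual_apply_apply]
  field

lemma hasGradientAt_cos_angle (x : E) {y : E} (hy : y ≠ 0) :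
    HasGradientAt (fun z : E => Real.cos (angle x z))
      (‖y‖⁻¹ • (‖x‖⁻¹ • x - (Real.cos (angle x y) / ‖y‖) • y)) y := by
  have hcos (z : E) : Real.cos (angle x z) = ⟪‖x‖⁻¹ • x, z⟫ / ‖z‖ := by
    rw [cos_angle, real_inner_smul_left]
    field
  simpa only [hcos, div_div, ← sq] using hasGradientAt_inner_div_norm (‖x‖⁻¹ • x) hy

lemma hasGradientAt_angle {x y : E} (hy : y ≠ 0) (hsin : Real.sin (angle x y) ≠ 0) :
    HasGradientAt (angle x)
      (-(‖y‖ * Real.sin (angle x y))⁻¹ •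
        (‖x‖⁻¹ • x - (Real.cos (angle x y) / ‖y‖) • y)) y := by
  have harccos : HasDerivAt Real.arccos (-(Real.sin (angle x y))⁻¹) (Real.cos (angle x y)) := by
    rw [Ne, Real.sin_eq_zero_iff_cos_eq, not_or] at hsin
    simpa [← Real.sin_arccos, Real.arccos_cos (angle_nonneg x y) (angle_le_pi x y)] using
      Real.hasDerivAt_arccos hsin.2 hsin.1
  have hangle : Real.arccos ∘ (fun z => Real.cos (angle x z)) = angle x :=
    funext fun z => Real.arccos_cos (angle_nonneg x z) (angle_le_pi x z)
  have hcomp := harccos.comp_hasFDerivAt y (hasGradientAt_cos_angle x hy).hasFDerivAt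
  rw [hangle, ← map_smul, smul_smul, neg_mul, ← mul_inv_rev] at hcomp
  exact hcomp

theorem gradient_signed_angle_wrt_second_normal_general {p q μ' : E} (hp : ‖p‖ = 1) (hq : ‖q‖ = 1)
    (h₁ : -1 < ⟪p, q⟫) (h₂ : ⟪p, q⟫ < 1) (hplane : p = ⟪p, q⟫ • q + ⟪μ', p⟫ • μ') :
    Real.sign ⟪μ', p⟫ • gradient (fun y : E => Real.arccos (⟪p, y⟫ / ‖y‖)) q = -μ' := by
  have hangle : (fun y : E => Real.arccos (⟪p, y⟫ / ‖y‖)) = angle p := by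
    funext y
    rw [angle, hp, one_mul]
  have hcos : Real.cos (angle p q) = ⟪p, q⟫ := by rw [cos_angle, hp, hq, mul_one, div_one]
  have hsin : Real.sin (angle p q) = |⟪μ', p⟫| := sin_angle_eq_abs_inner hp hq hplane
  have hs : |⟪μ', p⟫| ≠ 0 := by
    rw [abs_ne_zero, ← sq_pos_iff, sq_inner_eq_one_sub_sq_inner hp hplane]
    nlinarith
  have hgrad := (hasGradientAt_angle (norm_ne_zero_iff.mp (hq ▸ one_ne_zero)) (hsin ▸ hs)).gradient
  rw [hangle, hgrad, hsin, hcos, hp, hq, one_mul, inv_one, one_smul, div_one,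
    sub_eq_of_eq_add' hplane]
  calc Real.sign ⟪μ', p⟫ • -|⟪μ', p⟫|⁻¹ • ⟪μ', p⟫ • μ'
      = (-(|⟪μ', p⟫|⁻¹ * (Real.sign ⟪μ', p⟫ * ⟪μ', p⟫))) • μ' := by module
    _ = -μ' := by rw [sign_mul_self_eq_abs, inv_mul_cancel₀ hs, neg_one_smul]

end InnerProductSpace

theorem gradient_signed_angle_wrt_second_normal (p q μ μ' : EuclideanSpace ℝ (Fin 3))
    (hp : ‖p‖ = 1) (hq : ‖q‖ = 1) (hμ : ‖μ‖ = 1) (hμ' : ‖μ'‖ = 1)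
    (h₁ : -1 < ⟪p, q⟫) (h₂ : ⟪p, q⟫ < 1)
    (hμp : ⟪μ, p⟫ = 0) (hμ'q : ⟪μ', q⟫ = 0)
    (hplaneq : q = ⟪p, q⟫ • p + ⟪μ, q⟫ • μ)
    (hplanep : p = ⟪p, q⟫ • q + ⟪μ', p⟫ • μ')
    (hsign : Real.sign ⟪μ', p⟫ = Real.sign ⟪μ, q⟫) :
    Real.sign ⟪μ, q⟫ •
        gradient (fun y : EuclideanSpace ℝ (Fin 3) => Real.arccos (⟪p, y⟫ / ‖y‖)) q = -μ' :=
  hsign ▸ gradient_signed_angle_wrt_second_normal_general hp hq h₁ h₂ hplanep
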